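/- Let (T_i)_{i=1}^∞ be a sequence of bounded linear operators from a normed linear space X over 𝕂 (𝕂 = ℝ or ℂ) to a normed linear space Y. The following are equivalent: (1) (T_i) is mean Li-Yorke extremely chaotic; (2) there exists a mean Li-Yorke extreme pair; (3) there exists an absolutely mean irregular vector. -/

import Mathlib

open Filter Topology

variable {𝕜 X Y : Type*} [RCLike 𝕜] [NormedAddCommGroup X] [NormedSpace 𝕜 X]
  [NormedAddCommGroup Y] [NormedSpace 𝕜 Y]

/-- The Cesàro average `(1/n) ∑_{i=1}^{n} ‖T i x - T i y‖`. -/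
noncomputable def mavg (T : ℕ → X →L[𝕜] Y) (x y : X) (n : ℕ) : ℝ :=
  (∑ i ∈ Finset.Icc 1 n, ‖T i x - T i y‖) / n

/-- The Cesàro average `(1/n) ∑_{i=1}^{n} ‖T i x‖`. -/
noncomputable def avg (T : ℕ → X →L[𝕜] Y) (x : X) (n : ℕ) : ℝ :=
  (∑ i ∈ Finset.Icc 1 n, ‖T i x‖) / n

/-- `limsup_n (1/n) ∑_{i=1}^{n} ‖T i x - T i y‖`, computed in `EReal`. -/
noncomputable def msup (T : ℕ → X →L[𝕜] Y) (x y : X) : EReal :=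
  Filter.limsup (fun n => (mavg T x y n : EReal)) Filter.atTop

/-- `liminf_n (1/n) ∑_{i=1}^{n} ‖T i x - T i y‖`, computed in `EReal`. -/
noncomputable def minf (T : ℕ → X →L[𝕜] Y) (x y : X) : EReal :=
  Filter.liminf (fun n => (mavg T x y n : EReal)) Filter.atTop

/-- `limsup_n (1/n) ∑_{i=1}^{n} ‖T i x‖`, computed in `EReal`. -/
noncomputable def asup (T : ℕ → X →L[𝕜] Y) (x : X) : EReal :=
  Filter.limsup (fun n => (avg T x n : EReal)) Filter.atTop

/-- `liminf_n (1/n) ∑_{i=1}^{n} ‖T i x‖`, computed in `EReal`. -/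
noncomputable def ainf (T : ℕ → X →L[𝕜] Y) (x : X) : EReal :=
  Filter.liminf (fun n => (avg T x n : EReal)) Filter.atTop

/-- `(x, y)` is a mean Li-Yorke extreme pair for `(T i)`. -/
def MeanLiYorkeExtremePair (T : ℕ → X →L[𝕜] Y) (x y : X) : Prop :=
  minf T x y = 0 ∧ msup T x y = ⊤

/-- `x` is an absolutely mean irregular vector for `(T i)`. -/
def AbsolutelyMeanIrregular (T : ℕ → X →L[𝕜] Y) (x : X) : Prop :=
  ainf T x = 0 ∧ asup T x = ⊤

/-- `(T i)` is mean Li-Yorke extremely chaotic: there is an uncountable set all of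
whose pairs of distinct points are mean Li-Yorke extreme pairs. -/
def MeanLiYorkeExtremelyChaotic (T : ℕ → X →L[𝕜] Y) : Prop :=
  ∃ K : Set X, ¬ K.Countable ∧ ∀ x ∈ K, ∀ y ∈ K, x ≠ y → MeanLiYorkeExtremePair T x y

lemma liminf_zero_iff_aux (u : ℕ → ℝ) (hu : ∀ n, 0 ≤ u n) :
    liminf (fun n => (u n : EReal)) atTop = 0 ↔ ∀ ε : ℝ, 0 < ε → ∃ᶠ n in atTop, u n < ε := by
  constructor
  · intro h ε hε
    have h1 : liminf (fun n => (u n : EReal)) atTop < (ε : EReal) := by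
      rw [h]; exact_mod_cast hε
    exact (frequently_lt_of_liminf_lt (by isBoundedDefault) h1).mono
      fun n hn => by exact_mod_cast hn
  · intro h
    apply le_antisymm
    · apply le_of_forall_gt_imp_ge_of_dense
      intro a ha
      obtain ⟨r, hr0, hra⟩ := EReal.lt_iff_exists_real_btwn.1 ha
      refine le_trans ?_ hra.le
      apply liminf_le_of_frequently_le'
      exact (h r (by exact_mod_cast hr0)).mono fun n hn => by exact_mod_cast hn.le
    · apply le_liminf_of_le (by isBoundedDefault)
      exact Eventually.of_forall fun n => by exact_mod_cast hu n

lemma limsup_top_iff_aux (u : ℕ → ℝ) :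
    limsup (fun n => (u n : EReal)) atTop = ⊤ ↔ ∀ M : ℝ, ∃ᶠ n in atTop, M < u n := by
  constructor
  · intro h M
    have h1 : (M : EReal) < limsup (fun n => (u n : EReal)) atTop := by
      rw [h]; exact EReal.coe_lt_top M
    exact (frequently_lt_of_lt_limsup (by isBoundedDefault) h1).mono
      fun n hn => by exact_mod_cast hn
  · intro h
    rw [EReal.eq_top_iff_forall_lt]
    intro M
    refine lt_of_lt_of_le (b := ((M + 1 : ℝ) : EReal)) (by exact_mod_cast lt_add_one M) ?_
    apply le_limsup_of_frequently_le'
    exact (h (M + 1)).mono fun n hn => by exact_mod_cast hn.le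

lemma mavg_eq_avg_sub (T : ℕ → X →L[𝕜] Y) (x y : X) : mavg T x y = avg T (x - y) := by
  funext n
  simp [mavg, avg]

lemma pair_iff_irregular (T : ℕ → X →L[𝕜] Y) (x y : X) :
    MeanLiYorkeExtremePair T x y ↔ AbsolutelyMeanIrregular T (x - y) := by
  simp only [MeanLiYorkeExtremePair, AbsolutelyMeanIrregular, minf, msup, ainf, asup,
    mavg_eq_avg_sub]

lemma avg_nonneg_aux (T : ℕ → X →L[𝕜] Y) (x : X) (n : ℕ) : 0 ≤ avg T x n := by
  unfold avg; positivity

lemma avg_smul_aux (T : ℕ → X →L[𝕜] Y) (c : 𝕜) (x : X) (n : ℕ) :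
    avg T (c • x) n = ‖c‖ * avg T x n := by
  simp only [avg, map_smul, norm_smul, ← Finset.mul_sum, mul_div_assoc]

lemma irregular_smul (T : ℕ → X →L[𝕜] Y) (c : 𝕜) (hc : c ≠ 0) (x : X)
    (h : AbsolutelyMeanIrregular T x) : AbsolutelyMeanIrregular T (c • x) := by
  have hc' : 0 < ‖c‖ := norm_pos_iff.2 hc
  obtain ⟨h1, h2⟩ := h
  have h1 := (liminf_zero_iff_aux _ (avg_nonneg_aux T x)).1 h1
  have h2 := (limsup_top_iff_aux _).1 h2
  refine ⟨(liminf_zero_iff_aux _ (avg_nonneg_aux T _)).2 fun ε hε => ?_,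
    (limsup_top_iff_aux _).2 fun M => ?_⟩
  · refine (h1 (ε / ‖c‖) (by positivity)).mono fun n hn => ?_
    rw [avg_smul_aux, mul_comm]
    exact (lt_div_iff₀ hc').1 hn
  · refine (h2 (M / ‖c‖)).mono fun n hn => ?_
    rw [avg_smul_aux, mul_comm]
    exact (div_lt_iff₀ hc').1 hn

lemma irregular_ne_zero (T : ℕ → X →L[𝕜] Y) (x : X)
    (h : AbsolutelyMeanIrregular T x) : x ≠ 0 := by
  rintro rfl
  obtain ⟨n, hn⟩ := ((limsup_top_iff_aux _).1 h.2 0).exists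
  simp [avg] at hn

/-- Mean Li-Yorke extreme chaos is equivalent to the existence of a mean Li-Yorke
extreme pair, and to the existence of an absolutely mean irregular vector. -/
theorem meanLiYorkeExtremelyChaotic_tfae (T : ℕ → X →L[𝕜] Y) :
    List.TFAE [
      MeanLiYorkeExtremelyChaotic T,
      ∃ x y : X, MeanLiYorkeExtremePair T x y,
      ∃ x : X, AbsolutelyMeanIrregular T x] := by
  tfae_have 1 → 2 := by
    rintro ⟨K, hK, h⟩
    have hn : K.Nontrivial := by
      by_contra hn
      exact hK (Set.not_nontrivial_iff.1 hn).countable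
    obtain ⟨x, hx, y, hy, hxy⟩ := hn
    exact ⟨x, y, h x hx y hy hxy⟩
  tfae_have 2 → 3 := by
    rintro ⟨x, y, h⟩
    exact ⟨x - y, (pair_iff_irregular T x y).1 h⟩
  tfae_have 3 → 1 := by
    rintro ⟨x, hx⟩
    have hx0 := irregular_ne_zero T x hx
    have hinj : Function.Injective (fun r : ℝ => (r : 𝕜) • x) := by
      intro a b hab
      exact RCLike.ofReal_injective (smul_left_injective 𝕜 hx0 hab)
    refine ⟨Set.range (fun r : ℝ => (r : 𝕜) • x), ?_, ?_⟩
    · intro hc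
      rw [← Set.image_univ] at hc
      exact Cardinal.not_countable_real (Set.countable_of_injective_of_countable_image
        hinj.injOn hc)
    · rintro _ ⟨a, rfl⟩ _ ⟨b, rfl⟩ hab
      rw [pair_iff_irregular]
      simp only [← sub_smul]
      refine irregular_smul T _ (fun h0 => hab ?_) x hx
      simp only [sub_eq_zero.1 h0]
  tfae_finish
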